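/- For every real r ≥ 0, one has ∫_{S¹} ρ(r e^{iθ})² dσ(θ) ≥ r²/8, where dσ = dθ/(2π) is the probability Haar measure on the circle. -/

import Mathlib

open MeasureTheory

/-- The defect function `ρ(w) = ||1+w| − 1|`. -/
noncomputable def ρ (w : ℂ) : ℝ := |‖1 + w‖ - 1|

/-- Average over the circle with respect to the probability Haar measure `dσ = dθ/(2π)`. -/
noncomputable def circleAvg (f : ℝ → ℝ) : ℝ :=
  (1 / (2 * Real.pi)) * ∫ t in (0 : ℝ)..(2 * Real.pi), f t

/-- **Rotational averaging.** For every `r ≥ 0`,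
`∫_{S¹} ρ(r e^{iθ})² dσ(θ) ≥ r²/8`. -/
theorem stmt9 (r : ℝ) (hr : 0 ≤ r) :
    r ^ 2 / 8 ≤ circleAvg (fun θ => (ρ ((r : ℂ) * Complex.exp ((θ : ℂ) * Complex.I))) ^ 2) := by
  obtain ⟨t, ht1, ht2⟩ : ∃ t : ℝ, 1 ≤ t ∧ t ^ 2 = 1 + r ^ 2 :=
    ⟨Real.sqrt (1 + r ^ 2), Real.one_le_sqrt.mpr (by nlinarith [sq_nonneg r]),
      Real.sq_sqrt (by positivity)⟩
  have ht0 : 0 < t := by linarith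
  have hpt : ∀ θ : ℝ,
      (2 + r ^ 2 - 2 * t) + (2 * r - 2 * (r / t)) * Real.cos θ
        + (r ^ 2 / t ^ 3) * Real.cos θ ^ 2 + (-(r ^ 3 / t ^ 5)) * Real.cos θ ^ 3
      ≤ (ρ ((r : ℂ) * Complex.exp ((θ : ℂ) * Complex.I))) ^ 2 := by
    intro θ
    unfold ρ
    rw [sq_abs]
    set f := ‖1 + (r : ℂ) * Complex.exp ((θ : ℂ) * Complex.I)‖ with hf
    have hf0 : 0 ≤ f := norm_nonneg _
    have hf2 : f ^ 2 = t ^ 2 + 2 * r * Real.cos θ := by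
      rw [hf, ← Complex.normSq_eq_norm_sq, Complex.normSq_apply]
      simp only [Complex.add_re, Complex.add_im, Complex.one_re, Complex.one_im,
        Complex.re_ofReal_mul, Complex.im_ofReal_mul, Complex.exp_ofReal_mul_I_re,
        Complex.exp_ofReal_mul_I_im]
      nlinarith [Real.sin_sq_add_cos_sq θ]
    generalize Real.cos θ = c at *
    have key : 0 ≤ (f - t) ^ 4 * (f ^ 2 + 4 * f * t + 5 * t ^ 2) / (16 * t ^ 5) := by positivity
    have e : (f - t) ^ 4 * (f ^ 2 + 4 * f * t + 5 * t ^ 2) / (16 * t ^ 5)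
        = t + (r / t) * c - (r ^ 2 / (2 * t ^ 3)) * c ^ 2 + (r ^ 3 / (2 * t ^ 5)) * c ^ 3 - f := by
      have hy : r * c = (f ^ 2 - t ^ 2) / 2 := by linarith
      have : t + (r / t) * c - (r ^ 2 / (2 * t ^ 3)) * c ^ 2 + (r ^ 3 / (2 * t ^ 5)) * c ^ 3 - f
        = t + (r * c) / t - (r * c) ^ 2 / (2 * t ^ 3) + (r * c) ^ 3 / (2 * t ^ 5) - f := by ring
      rw [this, hy]
      field_simp
      ring
    rw [e] at key
    have e2 : (f - 1) ^ 2 = t ^ 2 + 2 * r * c + 1 - 2 * f := by rw [← hf2]; ring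
    rw [e2, ht2]
    have e3 : r ^ 2 / (2 * t ^ 3) = r ^ 2 / t ^ 3 / 2 := by field_simp
    have e4 : r ^ 3 / (2 * t ^ 5) = r ^ 3 / t ^ 5 / 2 := by field_simp
    rw [e3, e4] at key
    linarith
  have hint := intervalIntegral.integral_mono (μ := volume) (a := 0) (b := 2 * Real.pi)
    (by positivity) (Continuous.intervalIntegrable (by fun_prop) _ _)
    (Continuous.intervalIntegrable (by unfold ρ; fun_prop) _ _) hpt
  have hval : ∀ A B C D : ℝ, ∫ θ in (0 : ℝ)..(2 * Real.pi),
      (A + B * Real.cos θ + C * Real.cos θ ^ 2 + D * Real.cos θ ^ 3)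
      = 2 * Real.pi * (A + C / 2) := by
    intro A B C D
    rw [intervalIntegral.integral_add (Continuous.intervalIntegrable (by fun_prop) _ _)
        (Continuous.intervalIntegrable (by fun_prop) _ _),
      intervalIntegral.integral_add (Continuous.intervalIntegrable (by fun_prop) _ _)
        (Continuous.intervalIntegrable (by fun_prop) _ _),
      intervalIntegral.integral_add (Continuous.intervalIntegrable (by fun_prop) _ _)
        (Continuous.intervalIntegrable (by fun_prop) _ _)]
    simp only [intervalIntegral.integral_const_mul, intervalIntegral.integral_const,
      integral_cos, integral_cos_sq, integral_cos_pow_three]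
    simp
    ring
  rw [hval] at hint
  have hpi := Real.pi_pos
  unfold circleAvg
  have h2 : (2 + r ^ 2 - 2 * t) + (r ^ 2 / t ^ 3) / 2 ≤
      (1 / (2 * Real.pi)) * ∫ θ in (0 : ℝ)..(2 * Real.pi),
        (ρ ((r : ℂ) * Complex.exp ((θ : ℂ) * Complex.I))) ^ 2 := by
    rw [one_div, ← div_eq_inv_mul, le_div_iff₀ (by positivity)]
    linarith
  refine le_trans ?_ h2
  have hr2 : r ^ 2 = t ^ 2 - 1 := by linarith
  rw [hr2, ← sub_nonneg]
  have e : 2 + (t ^ 2 - 1) - 2 * t + (t ^ 2 - 1) / t ^ 3 / 2 - (t ^ 2 - 1) / 8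
      = (t - 1) * (7 * t ^ 4 - 9 * t ^ 3 + 4 * t + 4) / (8 * t ^ 3) := by
    field_simp
    ring
  rw [e]
  have h7 : 0 ≤ 7 * t ^ 4 - 9 * t ^ 3 + 4 * t + 4 := by
    nlinarith [sq_nonneg (t ^ 2 - t), sq_nonneg (t ^ 2 - 1), sq_nonneg (t - 1),
      mul_nonneg ht0.le (sq_nonneg (t - 1))]
  have h8 : 0 ≤ t - 1 := by linarith
  positivity
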